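/- arXiv:1910.03868 — 2 statements merged into one kernel-verified Lean document; each statement's English description precedes it below -/
import Mathlib

section
/- Let p be a prime, s ≥ 1, and G = (ℤ/pℤ)^s acting trivially on the field 𝔽_p. Then for every n ≥ 0, the cohomology group Hⁿ(G, 𝔽_p) is an 𝔽_p-vector space of dimension C(n+s−1, s−1). -/
/-!
Let `C` be a finite cyclic group whose order vanishes in `k`, let `χ : G →* C` be surjective, and
let `N` be the space of functions `C → k`, on which `G` acts by translation through `χ`. With `c` a
generator of `C`, the sequence `0 → k → N → N → k → 0` (constants, translation by `c` minus the
identity, summation) is exact, and by Shapiro's lemma `Hⁿ(G, N) ≅ Hⁿ(ker χ, k)`.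

If `ker χ` is a retract of `G`, the composite `Hⁿ(ker χ, k) → Hⁿ(G, k) → Hⁿ(G, N) → Hⁿ(ker χ, k)`
of inflation, inclusion of constants and evaluation at `1` is the identity. The last two groups are
isomorphic finite modules, so surjectivity of evaluation makes it bijective, and therefore
`Hⁿ(G, k) → Hⁿ(G, N)` is onto. Hence both maps out of `N` in the two short exact sequences
`0 → k → N → Q → 0` and `0 → Q → N → k → 0` vanish on cohomology (constants sum to `0` because
`|C| = 0` in `k`), the long exact sequences fall apart into short ones, and the ranks of `Hⁿ(G, k)`
are the partial sums of those of `Hⁿ(ker χ, k)`. Splitting off one cyclic factor at a time leads to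
the hockey-stick identity for multiset coefficients.
-/

open CategoryTheory Limits Finset

universe u

/-- `M` is free of rank `d` over `k`. Unlike `Module.finrank k M = d`, this is not satisfied by
junk values, and it is stable under extensions over any ring. -/
def IsFreeOfRank (k M : Type*) [Semiring k] [AddCommMonoid M] [Module k M] (d : ℕ) : Prop :=
  Nonempty (Module.Basis (Fin d) k M)

namespace IsFreeOfRank

section Semiring

variable {k M : Type*} [Semiring k] [AddCommMonoid M] [Module k M] {d : ℕ}

theorem finite (h : IsFreeOfRank k M d) : Module.Finite k M :=
  h.elim fun b => .of_basis b

theorem finrank_eq [StrongRankCondition k] (h : IsFreeOfRank k M d) : Module.finrank k M = d := by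
  obtain ⟨b⟩ := h
  rw [Module.finrank_eq_card_basis b, Fintype.card_fin]

variable (k) in
theorem self : IsFreeOfRank k k 1 :=
  ⟨Module.Basis.singleton (Fin 1) k⟩

end Semiring

variable {k : Type*} [Ring k] {a b : ℕ}

theorem of_iso {M N : ModuleCat k} (h : IsFreeOfRank k M a) (e : M ≅ N) : IsFreeOfRank k N a :=
  h.map fun b => b.map e.toLinearEquiv

theorem of_isZero {M : ModuleCat k} (h : IsZero M) : IsFreeOfRank k M 0 :=
  have := ModuleCat.subsingleton_of_isZero h
  ⟨Module.Basis.empty M⟩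

theorem of_shortExact {S : ShortComplex (ModuleCat k)} (hS : S.ShortExact)
    (h₁ : IsFreeOfRank k S.X₁ a) (h₃ : IsFreeOfRank k S.X₃ b) : IsFreeOfRank k S.X₂ (a + b) := by
  obtain ⟨b₁⟩ := h₁
  obtain ⟨b₃⟩ := h₃
  exact ⟨(ModuleCat.Basis.ofShortExact hS b₁ b₃).reindex finSumFinEquiv⟩

end IsFreeOfRank

theorem isIso_of_epi_endomorphism {k : Type*} [CommRing k] {M : ModuleCat k} [Module.Finite k M]
    (f : M ⟶ M) [Epi f] : IsIso f := by
  have hf : Function.Surjective f.hom := (ModuleCat.epi_iff_surjective f).1 inferInstance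
  exact (ConcreteCategory.isIso_iff_bijective f).2
    ⟨OrzechProperty.injective_of_surjective_endomorphism f.hom hf, hf⟩

section Abelian

variable {𝒜 : Type*} [Category 𝒜] [Abelian 𝒜] {W X Y Z : 𝒜}

theorem shortExact_kernel_ι (g : X ⟶ Y) [Epi g] :
    (ShortComplex.mk (kernel.ι g) g (kernel.condition g)).ShortExact where
  exact := ShortComplex.exact_kernel g

theorem comp_kernel_lift_eq_zero {f : W ⟶ X} {d : X ⟶ Y} {g : Y ⟶ Z} (w : f ≫ d = 0)
    (w' : d ≫ g = 0) : f ≫ kernel.lift g d w' = 0 := by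
  simp [← cancel_mono (kernel.ι g), w]

theorem shortExact_kernel_lift {f : W ⟶ X} {d : X ⟶ Y} {g : Y ⟶ Z} [Mono f]
    {w : f ≫ d = 0} {w' : d ≫ g = 0} (h : (ShortComplex.mk f d w).Exact)
    (h' : (ShortComplex.mk d g w').Exact) :
    (ShortComplex.mk f (kernel.lift g d w') (comp_kernel_lift_eq_zero w w')).ShortExact where
  exact := by
    let φ : ShortComplex.mk f (kernel.lift g d w') (comp_kernel_lift_eq_zero w w') ⟶
        ShortComplex.mk f d w := { τ₁ := 𝟙 W, τ₂ := 𝟙 X, τ₃ := kernel.ι g }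
    have : Epi φ.τ₁ := inferInstanceAs (Epi (𝟙 W))
    have : IsIso φ.τ₂ := inferInstanceAs (IsIso (𝟙 X))
    have : Mono φ.τ₃ := inferInstanceAs (Mono (kernel.ι g))
    exact (ShortComplex.exact_iff_of_epi_of_isIso_of_mono φ).2 h
  epi_g := h'.epi_kernelLift

end Abelian

section Rep

variable {k G : Type u} [CommRing k] [Group G] {A B C : Rep.{u} k G} {f : A ⟶ B} {g : B ⟶ C}

theorem comp_eq_zero_of_function_exact (h : Function.Exact f.hom g.hom) : f ≫ g = 0 :=
  ConcreteCategory.hom_ext _ _ h.apply_apply_eq_zero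

theorem exact_of_function_exact (h : Function.Exact f.hom g.hom) :
    (ShortComplex.mk f g (comp_eq_zero_of_function_exact h)).Exact := by
  rw [← ShortComplex.exact_map_iff_of_faithful _ (forget₂ (Rep k G) (ModuleCat k))]
  exact (ShortComplex.ShortExact.moduleCat_exact_iff_function_exact _).2 h

end Rep

section LongExactSequence

open groupCohomology

variable {k G : Type u} [CommRing k] [Group G]

theorem map_id_eq_zero_of_comp_eq_zero {A B C : Rep.{u} k G} {f : A ⟶ B} {g : B ⟶ C}
    (w : f ≫ g = 0) (n : ℕ) [Epi (map (MonoidHom.id G) f n)] : map (MonoidHom.id G) g n = 0 := by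
  rw [← cancel_epi (map (MonoidHom.id G) f n), ← map_id_comp, w, comp_zero]
  exact (functor k G n).map_zero A C

section ShortExact

variable {X : ShortComplex (Rep.{u} k G)} (hX : X.ShortExact)
include hX

theorem epi_map_id_of_map_id_eq_zero {n : ℕ} (h : map (MonoidHom.id G) X.g n = 0) :
    Epi (map (MonoidHom.id G) X.f n) :=
  (mapShortComplex₂_exact hX n).epi_f h

theorem shortExact_mapShortComplex₁ (h : ∀ n, map (MonoidHom.id G) X.g n = 0) (n : ℕ) :
    (mapShortComplex₁ hX (i := n) rfl).ShortExact where
  exact := mapShortComplex₁_exact hX rfl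
  mono_f := (mapShortComplex₃_exact hX rfl).mono_g (h n)
  epi_g := epi_map_id_of_map_id_eq_zero hX (h (n + 1))

theorem isFreeOfRank_zero_of_map_id_eq_zero (h : map (MonoidHom.id G) X.g 0 = 0) {d : ℕ}
    (h₂ : IsFreeOfRank k (groupCohomology X.X₂ 0) d) :
    IsFreeOfRank k (groupCohomology X.X₁ 0) d := by
  have := hX.mono_f
  have := epi_map_id_of_map_id_eq_zero hX h
  have := isIso_of_mono_of_epi (map (MonoidHom.id G) X.f 0)
  exact h₂.of_iso (asIso (map (MonoidHom.id G) X.f 0)).symm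

theorem isFreeOfRank_succ_of_map_id_eq_zero (h : ∀ n, map (MonoidHom.id G) X.g n = 0) {n a b : ℕ}
    (h₃ : IsFreeOfRank k (groupCohomology X.X₃ n) a)
    (h₂ : IsFreeOfRank k (groupCohomology X.X₂ (n + 1)) b) :
    IsFreeOfRank k (groupCohomology X.X₁ (n + 1)) (a + b) :=
  .of_shortExact (shortExact_mapShortComplex₁ hX h n) h₃ h₂

end ShortExact

theorem isFreeOfRank_of_periodic_exact {A N : Rep.{u} k G} {f : A ⟶ N} {d : N ⟶ N} {g : N ⟶ A}
    [Mono f] [Epi g] {w : f ≫ d = 0} {w' : d ≫ g = 0} (h : (ShortComplex.mk f d w).Exact)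
    (h' : (ShortComplex.mk d g w').Exact) (hfg : f ≫ g = 0)
    [∀ n, Epi (map (MonoidHom.id G) f n)] {κ : ℕ → ℕ}
    (hN : ∀ n, IsFreeOfRank k (groupCohomology N n) (κ n)) (n : ℕ) :
    IsFreeOfRank k (groupCohomology A n) (∑ i ∈ range (n + 1), κ i) := by
  have hX := shortExact_kernel_lift h h'
  have hX_zero (n : ℕ) := map_id_eq_zero_of_comp_eq_zero (comp_kernel_lift_eq_zero w w') n
  have hY := shortExact_kernel_ι g
  have hY_zero (n : ℕ) := map_id_eq_zero_of_comp_eq_zero hfg n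
  -- Each of the two sequences computes the cohomology of `A` and of `kernel g` from the other's.
  suffices IsFreeOfRank k (groupCohomology A n) (∑ i ∈ range (n + 1), κ i) ∧
    IsFreeOfRank k (groupCohomology (kernel g) n) (∑ i ∈ range (n + 1), κ i) from this.1
  induction n with
  | zero =>
    rw [zero_add, sum_range_one]
    exact ⟨isFreeOfRank_zero_of_map_id_eq_zero hX (hX_zero 0) (hN 0),
      isFreeOfRank_zero_of_map_id_eq_zero hY (hY_zero 0) (hN 0)⟩
  | succ n ih =>
    rw [sum_range_succ]
    exact ⟨isFreeOfRank_succ_of_map_id_eq_zero hX hX_zero ih.2 (hN (n + 1)),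
      isFreeOfRank_succ_of_map_id_eq_zero hY hY_zero ih.1 (hN (n + 1))⟩

end LongExactSequence

section ChangeOfGroup

open groupCohomology

variable (k : Type u) [CommRing k] {G H : Type u} [Group G] [Group H]

/-- The identity of `k`, as a map from the restriction along `r` of the trivial representation to
the trivial representation. -/
def resTrivial (r : G →* H) : Rep.res r (Rep.trivial k H k) ⟶ Rep.trivial k G k :=
  Rep.ofHom ⟨LinearMap.id, fun _ => rfl⟩

/-- The map induced by a group homomorphism on cohomology with trivial coefficients. -/
noncomputable def mapTrivial (r : G →* H) (n : ℕ) :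
    groupCohomology (Rep.trivial k H k) n ⟶ groupCohomology (Rep.trivial k G k) n :=
  map r (resTrivial k r) n

end ChangeOfGroup

open Representation

/-- The representation of `G` on functions `C → k` by translation through `χ : G →* C`. It is
coinduced from `χ.ker` when `χ` is surjective. -/
def functionRepresentation (k : Type*) [CommRing k] {G C : Type*} [Group G] [CommGroup C]
    (χ : G →* C) : Representation k G (C → k) where
  toFun g := LinearMap.funLeft k k (· * χ g)
  map_one' := by ext; simp [LinearMap.funLeft]
  map_mul' g h := by ext; simp [LinearMap.funLeft, mul_assoc]

namespace functionRepresentation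

section Exactness

variable (k : Type*) [CommRing k] {G C : Type*} [Group G] [CommGroup C] (χ : G →* C)

theorem apply_apply (g : G) (f : C → k) (x : C) :
    functionRepresentation k χ g f x = f (x * χ g) := rfl

/-- The inclusion of the constant functions. -/
def const : (trivial k G k).IntertwiningMap (functionRepresentation k χ) where
  toLinearMap := LinearMap.pi fun _ => LinearMap.id
  isIntertwining' _ := rfl

/-- The difference operator `f ↦ (x ↦ f (x * c) - f x)`. -/
def diff (c : C) : (functionRepresentation k χ).IntertwiningMap (functionRepresentation k χ) where
  toLinearMap := LinearMap.funLeft k k (· * c) - LinearMap.id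
  isIntertwining' g := by
    ext f x
    simp [LinearMap.funLeft, apply_apply, mul_right_comm x c]

/-- Summation over `C`. -/
def sum [Fintype C] : (functionRepresentation k χ).IntertwiningMap (trivial k G k) where
  toFun f := ∑ x, f x
  map_add' _ _ := sum_add_distrib
  map_smul' a f := (mul_sum univ f a).symm
  isIntertwining' g := LinearMap.ext fun f => Equiv.sum_comp (Equiv.mulRight (χ g)) f

/-- The comparison with the coinduced representation: pullback of functions along `χ`. -/
def toCoind :
    (functionRepresentation k χ).IntertwiningMap (coind χ.ker.subtype (trivial k χ.ker k)) where
  toLinearMap := (LinearMap.funLeft k k χ).codRestrict _ fun f g x => by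
    have hg : χ g = 1 := g.2
    simp [LinearMap.funLeft, hg]
  isIntertwining' g := by
    ext f x
    exact congrArg f (map_mul χ x g).symm

/-- Evaluation at `1`, which is equivariant for the kernel of `χ` only. -/
def eval : IntertwiningMap ((functionRepresentation k χ).comp χ.ker.subtype)
    (trivial k χ.ker k) where
  toLinearMap := LinearMap.proj 1
  isIntertwining' g := LinearMap.ext fun f => congrArg f ((one_mul _).trans g.2)

variable {k}

theorem const_apply (a : k) (x : C) : const k χ a x = a := rfl

theorem diff_apply (c : C) (f : C → k) (x : C) : diff k χ c f x = f (x * c) - f x := rfl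

theorem sum_apply [Fintype C] (f : C → k) : sum k χ f = ∑ x, f x := rfl

theorem const_injective : Function.Injective (const k χ) := fun _ _ h => congrFun h 1

theorem sum_surjective [Fintype C] : Function.Surjective (sum k χ) := fun a => by
  classical exact ⟨Pi.single 1 a, by simp [sum_apply]⟩

theorem sum_const [Fintype C] (hC : (Nat.card C : k) = 0) (a : k) :
    sum k χ (const k χ a) = 0 := by
  simp [sum_apply, const_apply, ← Nat.card_eq_fintype_card, hC]

theorem exact_const_diff {c : C} (hc : ∀ x, x ∈ Subgroup.zpowers c) :
    Function.Exact (const k χ) (diff k χ c) := fun f => by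
  refine ⟨fun hf => ⟨f 1, funext fun x => ?_⟩, ?_⟩
  · have hf_mul (x : C) : f (x * c) = f x := sub_eq_zero.1 (congrFun hf x)
    obtain ⟨n, rfl⟩ := hc x
    change f 1 = f (c ^ n)
    induction n with
    | zero => simp
    | succ n ih => rw [zpow_add_one, hf_mul, ih]
    | pred n ih => rw [← hf_mul (c ^ (-(n : ℤ) - 1)), ← zpow_add_one, sub_add_cancel, ih]
  · rintro ⟨a, rfl⟩
    exact funext fun _ => sub_self a

theorem mem_coinvariantsKer_of_sum_eq_zero [Fintype C] {f : C → k} (hf : ∑ x, f x = 0) :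
    f ∈ Coinvariants.ker (functionRepresentation k (MonoidHom.id C)) := by
  classical
  have hsum : ∑ x, Pi.single (M := fun _ : C => k) 1 (f x) = 0 := by
    rw [← Pi.single_zero (M := fun _ : C => k) 1, ← hf]
    exact (map_sum (LinearMap.single k (fun _ : C => k) 1) f univ).symm
  have hf_eq : f = ∑ x, (Pi.single x (f x) - Pi.single 1 (f x)) := by
    rw [sum_sub_distrib, univ_sum_single, hsum, sub_zero]
  rw [hf_eq]
  refine Submodule.sum_mem _ fun x _ =>
    Coinvariants.mem_ker_of_eq x⁻¹ (Pi.single 1 (f x)) _ (congrArg₂ _ ?_ rfl)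
  ext y
  simp [apply_apply, Pi.single_apply, mul_inv_eq_one]

theorem exact_diff_sum [Fintype C] {c : C} (hc : ∀ x, x ∈ Subgroup.zpowers c) :
    Function.Exact (diff k χ c) (sum k χ) := fun f => by
  refine ⟨fun hf => ?_, ?_⟩
  · have hf_mem := mem_coinvariantsKer_of_sum_eq_zero hf
    rwa [FiniteCyclicGroup.coinvariantsKer_eq_range _ c hc] at hf_mem
  · rintro ⟨h, rfl⟩
    simpa [sum_apply, diff_apply, sub_eq_zero] using Equiv.sum_comp (Equiv.mulRight c) h

variable {χ} in
theorem toCoind_bijective (hχ : Function.Surjective χ) : Function.Bijective (toCoind k χ) := by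
  refine ⟨fun f₁ f₂ h => hχ.injective_comp_right (congrArg Subtype.val h), fun F => ?_⟩
  obtain ⟨σ, hσ⟩ := hχ.hasRightInverse
  refine ⟨F.1 ∘ σ, Subtype.ext (funext fun x => ?_)⟩
  have hF := F.2 ⟨σ (χ x) * x⁻¹, by simp [MonoidHom.mem_ker, hσ (χ x)]⟩ x
  change F.1 (σ (χ x)) = F.1 x
  simpa using hF

end Exactness

section Cohomology

open groupCohomology

variable (k : Type u) [CommRing k] {G C : Type u} [Group G] [CommGroup C] {χ : G →* C}

/-- Shapiro's lemma for `functionRepresentation k χ`. -/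
noncomputable def shapiroIso (hχ : Function.Surjective χ) (n : ℕ) :
    groupCohomology (Rep.of (functionRepresentation k χ)) n ≅
      groupCohomology (Rep.trivial k χ.ker k) n :=
  (functor k G n).mapIso (Rep.mkIso ((toCoind k χ).ofBijective (toCoind_bijective hχ))) ≪≫
    coindIso (Rep.trivial k χ.ker k) n

/-- The map induced by `const` on cohomology. -/
noncomputable def mapConst (χ : G →* C) (n : ℕ) :
    groupCohomology (Rep.trivial k G k) n ⟶
      groupCohomology (Rep.of (functionRepresentation k χ)) n :=
  map (A := Rep.trivial k G k) (MonoidHom.id G) (Rep.ofHom (const k χ)) n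

/-- Restriction to the kernel of `χ` followed by the map induced by `eval`. -/
noncomputable def mapEval (χ : G →* C) (n : ℕ) :
    groupCohomology (Rep.of (functionRepresentation k χ)) n ⟶
      groupCohomology (Rep.trivial k χ.ker k) n :=
  map χ.ker.subtype (Rep.ofHom (eval k χ)) n

variable {r : G →* χ.ker} (hr : r.comp χ.ker.subtype = MonoidHom.id χ.ker)
include hr

theorem mapTrivial_comp_mapConst_comp_mapEval (n : ℕ) :
    (mapTrivial k r n ≫ mapConst k χ n) ≫ mapEval k χ n = 𝟙 _ := by
  rw [mapTrivial, mapConst, mapEval, ← map_comp, ← map_comp, ← map_id]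
  exact map_congr hr rfl n

theorem epi_mapConst (hχ : Function.Surjective χ) (n : ℕ)
    [Module.Finite k (groupCohomology (Rep.trivial k χ.ker k) n)] : Epi (mapConst k χ n) := by
  have hsplit := mapTrivial_comp_mapConst_comp_mapEval k hr n
  have : Epi (mapEval k χ n) := epi_of_epi_fac hsplit
  have : IsIso ((shapiroIso k hχ n).inv ≫ mapEval k χ n) := isIso_of_epi_endomorphism _
  have : IsIso (mapEval k χ n) :=
    IsIso.of_isIso_comp_left (shapiroIso k hχ n).inv (mapEval k χ n)
  have : Epi (mapTrivial k r n ≫ mapConst k χ n) := by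
    rw [← IsIso.inv_eq_of_inv_hom_id hsplit]
    infer_instance
  exact epi_of_epi (mapTrivial k r n) _

end Cohomology

end functionRepresentation

section TrivialCoefficients

open groupCohomology functionRepresentation

variable {k : Type u} [CommRing k]

theorem isFreeOfRank_of_retraction_ker {G C : Type u} [Group G] [CommGroup C] [Finite C]
    [IsCyclic C] (hC : (Nat.card C : k) = 0) {χ : G →* C} (hχ : Function.Surjective χ)
    {r : G →* χ.ker} (hr : r.comp χ.ker.subtype = MonoidHom.id χ.ker) {κ : ℕ → ℕ}
    (hκ : ∀ n, IsFreeOfRank k (groupCohomology (Rep.trivial k χ.ker k) n) (κ n)) (n : ℕ) :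
    IsFreeOfRank k (groupCohomology (Rep.trivial k G k) n) (∑ i ∈ range (n + 1), κ i) := by
  have := Fintype.ofFinite C
  obtain ⟨c, hc⟩ := IsCyclic.exists_generator (α := C)
  have : Mono (Rep.ofHom (const k χ)) := (Rep.mono_iff_injective _).2 (const_injective χ)
  have : Epi (Rep.ofHom (sum k χ)) := (Rep.epi_iff_surjective _).2 (sum_surjective χ)
  have (n : ℕ) : Epi (map (A := Rep.trivial k G k) (MonoidHom.id G) (Rep.ofHom (const k χ)) n) :=
    have := (hκ n).finite
    epi_mapConst k hr hχ n
  exact isFreeOfRank_of_periodic_exact (f := Rep.ofHom (const k χ)) (d := Rep.ofHom (diff k χ c))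
    (g := Rep.ofHom (sum k χ)) (exact_of_function_exact (exact_const_diff χ hc))
    (exact_of_function_exact (exact_diff_sum χ hc))
    (ConcreteCategory.hom_ext _ _ (sum_const χ hC))
    (fun n => (hκ n).of_iso (shapiroIso k hχ n).symm) n

theorem IsFreeOfRank.congr_mulEquiv {G H : Type u} [Group G] [Group H] {n d : ℕ}
    (h : IsFreeOfRank k (groupCohomology (Rep.trivial k G k) n) d) (e : G ≃* H) :
    IsFreeOfRank k (groupCohomology (Rep.trivial k H k) n) d :=
  h.of_iso (mapIso (A := Rep.trivial k H k) (B := Rep.trivial k G k) e (LinearEquiv.refl k k)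
    (fun _ => rfl) n)

/-- The kernel of the first projection of a product is the second factor. -/
def kerFstEquiv (C K : Type*) [Group C] [Group K] : (MonoidHom.fst C K).ker ≃* K where
  toFun x := x.1.2
  invFun y := ⟨(1, y), rfl⟩
  left_inv x := Subtype.ext (Prod.ext x.2.symm rfl)
  right_inv _ := rfl
  map_mul' _ _ := rfl

theorem isFreeOfRank_prod {C K : Type u} [CommGroup C] [Finite C] [IsCyclic C] [Group K]
    (hC : (Nat.card C : k) = 0) {κ : ℕ → ℕ}
    (hκ : ∀ n, IsFreeOfRank k (groupCohomology (Rep.trivial k K k) n) (κ n)) (n : ℕ) :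
    IsFreeOfRank k (groupCohomology (Rep.trivial k (C × K) k) n) (∑ i ∈ range (n + 1), κ i) :=
  isFreeOfRank_of_retraction_ker hC Prod.fst_surjective
    (r := (kerFstEquiv C K).symm.toMonoidHom.comp (MonoidHom.snd C K))
    (MonoidHom.ext (kerFstEquiv C K).symm_apply_apply)
    (fun n => (hκ n).congr_mulEquiv (kerFstEquiv C K).symm) n

theorem isFreeOfRank_of_subsingleton (G : Type u) [Group G] [Subsingleton G] (n : ℕ) :
    IsFreeOfRank k (groupCohomology (Rep.trivial k G k) n) (Nat.multichoose 0 n) := by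
  cases n with
  | zero =>
    rw [Nat.multichoose_zero_right]
    exact (IsFreeOfRank.self k).of_iso (M := .of k k) (H0IsoOfIsTrivial (Rep.trivial k G k)).symm
  | succ n =>
    rw [Nat.multichoose_zero_succ]
    exact .of_isZero (isZero_groupCohomology_succ_of_subsingleton _ n)

theorem sum_range_succ_multichoose (s n : ℕ) :
    ∑ i ∈ range (n + 1), s.multichoose i = (s + 1).multichoose n := by
  induction n with
  | zero => simp
  | succ n ih => rw [sum_range_succ, ih, Nat.multichoose_succ_succ, add_comm]

theorem isFreeOfRank_pi {s : ℕ} {A : Fin s → Type u} [∀ i, AddCommGroup (A i)] [∀ i, Finite (A i)]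
    [∀ i, IsAddCyclic (A i)] (hA : ∀ i, (Nat.card (A i) : k) = 0) (n : ℕ) :
    IsFreeOfRank k (groupCohomology (Rep.trivial k (Multiplicative (∀ i, A i)) k) n)
      (s.multichoose n) := by
  induction s generalizing n with
  | zero => exact isFreeOfRank_of_subsingleton _ n
  | succ s ih =>
    have h := isFreeOfRank_prod (C := Multiplicative (A 0)) (hA 0) (ih fun i => hA i.succ) n
    rw [sum_range_succ_multichoose] at h
    exact h.congr_mulEquiv ((MulEquiv.prodMultiplicative _ _).symm.trans
      (Fin.consLinearEquiv ℤ A).toAddEquiv.toMultiplicative)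

theorem finrank_groupCohomology_elementaryAbelian_general [Nontrivial k] {s : ℕ}
    {A : Fin s → Type u} [∀ i, AddCommGroup (A i)] [∀ i, Finite (A i)] [∀ i, IsAddCyclic (A i)]
    (hA : ∀ i, (Nat.card (A i) : k) = 0) (hs : 1 ≤ s) (n : ℕ) :
    Module.finrank k (groupCohomology (Rep.trivial k (Multiplicative (∀ i, A i)) k) n)
      = (n + s - 1).choose (s - 1) := by
  rw [(isFreeOfRank_pi hA n).finrank_eq, Nat.multichoose_eq, add_comm s n]
  exact Nat.choose_symm_of_eq_add (by lia)

end TrivialCoefficients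

/-- For `G = (ℤ/pℤ)^s` acting trivially on `𝔽_p`, the cohomology `Hⁿ(G, 𝔽_p)` is an
`𝔽_p`-vector space of dimension `C(n + s - 1, s - 1)`. -/
theorem finrank_groupCohomology_elementaryAbelian (p s n : ℕ) [Fact p.Prime] (hs : 1 ≤ s) :
    Module.finrank (ZMod p)
      (groupCohomology (Rep.trivial (ZMod p) (Multiplicative (Fin s → ZMod p)) (ZMod p)) n)
      = (n + s - 1).choose (s - 1) :=
  finrank_groupCohomology_elementaryAbelian_general (A := fun _ => ZMod p) (by simp) hs n
end

section
/- Let G = C₂ × C₂ be the Klein four-group acting trivially on 𝔽₂. Then for every n ≥ 0, Hⁿ(G, 𝔽₂) is an 𝔽₂-vector space of dimension n + 1. -/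
/-- The Klein four-group `C₂ × C₂`. -/
abbrev Klein : Type := Multiplicative (ZMod 2 × ZMod 2)

/-!
For a `k[G]`-module `A` killed by `2` and a subgroup `S` of index two, the unit of coinduction and
the trace form a short exact sequence `0 ⟶ A ⟶ Coind (Res A) ⟶ A ⟶ 0`. By Shapiro's lemma its
long exact sequence is the Gysin sequence
`⋯ ⟶ Hⁿ(G, A) ⟶ Hⁿ⁺¹(G, A) ⟶ Hⁿ⁺¹(S, A) ⟶ ⋯`, whose second map is restriction. If `G` retracts onto
`S` and the coefficients are trivial, inflation along the retraction splits restriction, so that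
`Hⁿ⁺¹(G) ≃ Hⁿ(G) × Hⁿ⁺¹(S)`. For `⊥ < C₂` this makes every `Hⁿ(C₂)` one copy of the coefficients,
and for `C₂ < C₂ × C₂` it adds one copy in each degree.
-/

universe u

open CategoryTheory

section Coinduction

variable {k G : Type u} [CommRing k] [Group G] (A : Rep.{u} k G) (S : Subgroup G)

/-- The restriction map `Hⁿ(G, A) ⟶ Hⁿ(S, A)`. -/
noncomputable abbrev cohomologyRestriction (n : ℕ) :
    groupCohomology A n ⟶ groupCohomology (Rep.res S.subtype A) n :=
  groupCohomology.map S.subtype (𝟙 (Rep.res S.subtype A)) n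

/-- The unit `A ⟶ Coind (Res A)` of the adjunction between restriction to `S` and coinduction;
it sends `a` to the function `g ↦ g • a`. -/
noncomputable abbrev coindUnit : A ⟶ Rep.coind S.subtype (Rep.res S.subtype A) :=
  Rep.resCoindToHom S.subtype A (Rep.res S.subtype A) (𝟙 _)

variable {S} in
/-- The counit `Res (Coind B) ⟶ B` of the adjunction between restriction to `S` and coinduction;
it is evaluation at `1`. -/
noncomputable abbrev coindCounit (B : Rep.{u} k S) :
    Rep.res S.subtype (Rep.coind S.subtype B) ⟶ B :=
  (Rep.resCoindAdjunction.{u} k S.subtype).counit.app B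

lemma map_coindUnit_comp_map_coindCounit (n : ℕ) :
    groupCohomology.map (MonoidHom.id G) (coindUnit A S) n ≫
        groupCohomology.map S.subtype (coindCounit (Rep.res S.subtype A)) n =
      cohomologyRestriction A S n := by
  rw [← groupCohomology.map_comp]
  refine groupCohomology.map_congr rfl ?_ n
  ext a
  exact congrArg (fun f : Module.End k A => f a) (map_one A.ρ)

variable {A S}

-- Mathlib does not identify Shapiro's isomorphism `groupCohomology.coindIso` with this map, but a
-- surjection onto a finite module from an isomorphic copy of it is injective.
lemma map_coindCounit_injective {B : Rep.{u} k S} {n : ℕ} [Module.Finite k (groupCohomology B n)]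
    (h : Function.Surjective (groupCohomology.map S.subtype (coindCounit B) n)) :
    Function.Injective (groupCohomology.map S.subtype (coindCounit B) n) :=
  OrzechProperty.injective_of_surjective_of_injective
    (groupCohomology.coindIso B n).toLinearEquiv.toLinearMap
    (groupCohomology.map S.subtype (coindCounit B) n).hom
    (groupCohomology.coindIso B n).toLinearEquiv.injective h

variable {n : ℕ} [Module.Finite k (groupCohomology (Rep.res S.subtype A) n)]

lemma map_coindCounit_injective_of_restriction_surjective
    (h : Function.Surjective (cohomologyRestriction A S n)) :
    Function.Injective
      (groupCohomology.map S.subtype (coindCounit (Rep.res S.subtype A)) n) := by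
  rw [← map_coindUnit_comp_map_coindCounit, ConcreteCategory.coe_comp] at h
  exact map_coindCounit_injective h.of_comp

lemma map_coindUnit_surjective (h : Function.Surjective (cohomologyRestriction A S n)) :
    Function.Surjective (groupCohomology.map (MonoidHom.id G) (coindUnit A S) n) := by
  have hinj := map_coindCounit_injective_of_restriction_surjective h
  rw [← map_coindUnit_comp_map_coindCounit, ConcreteCategory.coe_comp] at h
  exact h.of_comp_left hinj

lemma map_coindUnit_eq_zero_iff (h : Function.Surjective (cohomologyRestriction A S n))
    (x : groupCohomology A n) :
    groupCohomology.map (MonoidHom.id G) (coindUnit A S) n x = 0 ↔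
      cohomologyRestriction A S n x = 0 := by
  rw [← map_coindUnit_comp_map_coindCounit, ConcreteCategory.comp_apply]
  exact (map_eq_zero_iff _ (map_coindCounit_injective_of_restriction_surjective h)).symm

end Coinduction

section IndexTwo

variable {k G : Type u} [CommRing k] [Group G] {A : Rep.{u} k G} {S : Subgroup G} {t : G}

/-- The linear map `Coind (Res A) → A`, `f ↦ g⁻¹ • f g`. It depends only on the coset `S g`. -/
def coindUntwist (A : Rep.{u} k G) (S : Subgroup G) (g : G) :
    Rep.coind S.subtype (Rep.res S.subtype A) →ₗ[k] A :=
  A.ρ g⁻¹ ∘ₗ LinearMap.proj g ∘ₗ (Representation.coindV _ _).subtype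

lemma coindUntwist_apply (g : G) (f : Rep.coind S.subtype (Rep.res S.subtype A)) :
    coindUntwist A S g f = A.ρ g⁻¹ (f.1 g) :=
  rfl

lemma rho_coindUntwist (g : G) (f : Rep.coind S.subtype (Rep.res S.subtype A)) :
    A.ρ g (coindUntwist A S g f) = f.1 g := by
  change A.ρ g (A.ρ g⁻¹ (f.1 g)) = f.1 g
  simp

lemma coindUntwist_congr {g h : G} (hgh : g * h⁻¹ ∈ S) :
    coindUntwist A S g = coindUntwist A S h := by
  ext f
  change A.ρ g⁻¹ (f.1 g) = A.ρ h⁻¹ (f.1 h)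
  have hf : f.1 g = A.ρ (g * h⁻¹) (f.1 h) := by
    simpa using f.2 ⟨g * h⁻¹, hgh⟩ h
  rw [hf, ← Module.End.mul_apply, ← map_mul, inv_mul_cancel_left]

lemma coindUntwist_rho (x g : G) (f : Rep.coind S.subtype (Rep.res S.subtype A)) :
    coindUntwist A S x ((Rep.coind S.subtype (Rep.res S.subtype A)).ρ g f) =
      A.ρ g (coindUntwist A S (x * g) f) := by
  change A.ρ x⁻¹ (f.1 (x * g)) = A.ρ g (A.ρ (x * g)⁻¹ (f.1 (x * g)))
  rw [← Module.End.mul_apply, ← map_mul, mul_inv_rev, mul_inv_cancel_left]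

lemma coindUntwist_coindUnit (g : G) (a : A) :
    coindUntwist A S g (coindUnit A S a) = a := by
  change A.ρ g⁻¹ (A.ρ g a) = a
  simp

lemma coindUntwist_of_mem {g : G} (hg : g ∈ S) : coindUntwist A S g = coindUntwist A S 1 :=
  coindUntwist_congr (by simpa)

lemma coindUntwist_of_notMem (hS : S.index = 2) {g h : G} (hg : g ∉ S) (hh : h ∉ S) :
    coindUntwist A S g = coindUntwist A S h :=
  coindUntwist_congr (by simp [Subgroup.mul_mem_iff_of_index_two hS, hg, hh])

/-- For `S` of index two and `t ∉ S`, the trace `Coind (Res A) ⟶ A`, `f ↦ f 1 + t⁻¹ • f t`. -/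
noncomputable def coindTrace (A : Rep.{u} k G) (hS : S.index = 2) (ht : t ∉ S) :
    Rep.coind S.subtype (Rep.res S.subtype A) ⟶ A :=
  Rep.ofHom
    { toLinearMap := coindUntwist A S 1 + coindUntwist A S t
      isIntertwining' g := by
        ext f
        have htg : t * g ∈ S ↔ g ∉ S := by simp [Subgroup.mul_mem_iff_of_index_two hS, ht]
        change coindUntwist A S 1 _ + coindUntwist A S t _ =
          A.ρ g (coindUntwist A S 1 f + coindUntwist A S t f)
        rw [coindUntwist_rho, coindUntwist_rho, ← map_add, one_mul]
        by_cases hg : g ∈ S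
        · rw [coindUntwist_of_mem hg, coindUntwist_of_notMem hS (htg.not.2 (not_not.2 hg)) ht]
        · rw [coindUntwist_of_notMem hS hg ht, coindUntwist_of_mem (htg.2 hg), add_comm] }

lemma coindTrace_apply (hS : S.index = 2) (ht : t ∉ S)
    (f : Rep.coind S.subtype (Rep.res S.subtype A)) :
    coindTrace A hS ht f = coindUntwist A S 1 f + coindUntwist A S t f :=
  rfl

lemma coindTrace_surjective (hS : S.index = 2) (ht : t ∉ S) :
    Function.Surjective (coindTrace A hS ht) := by
  classical
  intro a
  refine ⟨⟨fun g => if g ∈ S then A.ρ g a else 0, fun s g => ?_⟩, ?_⟩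
  · by_cases hg : g ∈ S <;> simp [hg, S.mul_mem_cancel_left s.2]
  · rw [coindTrace_apply, coindUntwist_apply, coindUntwist_apply]
    simp [ht]

variable [Module (ZMod 2) A]

lemma coindTrace_coindUnit (hS : S.index = 2) (ht : t ∉ S) (a : A) :
    coindTrace A hS ht (coindUnit A S a) = 0 := by
  rw [coindTrace_apply, coindUntwist_coindUnit, coindUntwist_coindUnit, ZModModule.add_self]

lemma eq_coindUnit_of_coindTrace_eq_zero (hS : S.index = 2) (ht : t ∉ S)
    {f : Rep.coind S.subtype (Rep.res S.subtype A)} (hf : coindTrace A hS ht f = 0) :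
    coindUnit A S (coindUntwist A S 1 f) = f := by
  have heq : coindUntwist A S 1 f = coindUntwist A S t f := by
    rwa [coindTrace_apply, add_eq_zero_iff_eq_neg, ZModModule.neg_eq_self] at hf
  refine Subtype.ext (funext fun g => ?_)
  have hg : coindUntwist A S g f = coindUntwist A S 1 f := by
    by_cases hgS : g ∈ S
    · rw [coindUntwist_of_mem hgS]
    · rw [coindUntwist_of_notMem hS hgS ht, heq]
  change A.ρ g (coindUntwist A S 1 f) = f.1 g
  rw [← hg, rho_coindUntwist]

/-- The sequence `0 ⟶ A ⟶ Coind (Res A) ⟶ A ⟶ 0` attached to a subgroup of index two. -/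
noncomputable abbrev coindSequence (A : Rep.{u} k G) [Module (ZMod 2) A] (hS : S.index = 2)
    (ht : t ∉ S) : ShortComplex (Rep k G) where
  f := coindUnit A S
  g := coindTrace A hS ht
  zero := by
    ext a
    exact coindTrace_coindUnit hS ht a

lemma coindSequence_shortExact (hS : S.index = 2) (ht : t ∉ S) :
    (coindSequence A hS ht).ShortExact where
  exact := by
    rw [← ShortComplex.exact_map_iff_of_faithful _ (forget₂ (Rep k G) (ModuleCat k)),
      ShortComplex.moduleCat_exact_iff]
    exact fun f hf => ⟨_, eq_coindUnit_of_coindTrace_eq_zero hS ht hf⟩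
  mono_f := (Rep.mono_iff_injective _).2
    (Function.LeftInverse.injective (coindUntwist_coindUnit (1 : G)))
  epi_g := (Rep.epi_iff_surjective _).2 (coindTrace_surjective hS ht)

end IndexTwo

section LongExactSequence

variable {k G : Type u} [CommRing k] [Group G]

lemma connectingHom_injective {X : ShortComplex (Rep k G)} (hX : X.ShortExact) {n : ℕ}
    (h : Function.Surjective (groupCohomology.map (MonoidHom.id G) X.f n)) :
    Function.Injective (groupCohomology.δ hX n (n + 1) rfl) := by
  rw [injective_iff_map_eq_zero]
  intro x hx
  obtain ⟨y, rfl⟩ := (ShortComplex.moduleCat_exact_iff _).1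
    (groupCohomology.mapShortComplex₃_exact hX rfl) x hx
  obtain ⟨z, rfl⟩ := h y
  exact congrArg (fun φ => φ.hom z) (groupCohomology.mapShortComplex₂ X n).zero

lemma connectingHom_exact {X : ShortComplex (Rep k G)} (hX : X.ShortExact) (n : ℕ) :
    Function.Exact (groupCohomology.δ hX n (n + 1) rfl)
      (groupCohomology.map (MonoidHom.id G) X.f (n + 1)) :=
  (ShortComplex.ShortExact.moduleCat_exact_iff_function_exact _).1
    (groupCohomology.mapShortComplex₁_exact hX rfl)

theorem exists_gysin_hom {A : Rep.{u} k G} [Module (ZMod 2) A] {S : Subgroup G} {n : ℕ}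
    [Module.Finite k (groupCohomology (Rep.res S.subtype A) n)]
    [Module.Finite k (groupCohomology (Rep.res S.subtype A) (n + 1))] (hS : S.index = 2)
    (h : Function.Surjective (cohomologyRestriction A S n))
    (h' : Function.Surjective (cohomologyRestriction A S (n + 1))) :
    ∃ d : groupCohomology A n →ₗ[k] groupCohomology A (n + 1),
      Function.Injective d ∧ Function.Exact d (cohomologyRestriction A S (n + 1)) := by
  obtain ⟨t, ht⟩ : ∃ t, t ∉ S := by
    by_contra! hall
    simp [(Subgroup.eq_top_iff' S).2 hall] at hS
  have hX := coindSequence_shortExact (A := A) hS ht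
  refine ⟨(groupCohomology.δ hX n (n + 1) rfl).hom,
    connectingHom_injective hX (map_coindUnit_surjective h), fun x => ?_⟩
  rw [← map_coindUnit_eq_zero_iff h']
  exact connectingHom_exact hX n x

end LongExactSequence

section TrivialCoefficients

variable {k G V : Type u} [CommRing k] [Group G] [AddCommGroup V] [Module k V] {S : Subgroup G}

variable (k V) in
/-- The map `Hⁿ(H, V) ⟶ Hⁿ(G, V)` induced by a homomorphism `G →* H`, for trivial coefficients. -/
noncomputable abbrev trivialCohomologyMap {H : Type u} [Group H] (f : G →* H) (n : ℕ) :
    groupCohomology (Rep.trivial k H V) n ⟶ groupCohomology (Rep.trivial k G V) n :=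
  groupCohomology.map (A := Rep.trivial k H V) (B := Rep.trivial k G V) f
    (Rep.ofHom ⟨LinearMap.id, fun _ => rfl⟩) n

lemma trivialCohomologyMap_comp_eq_id {H : Type u} [Group H] {i : H →* G} {r : G →* H}
    (hr : r.comp i = MonoidHom.id H) (n : ℕ) :
    trivialCohomologyMap k V r n ≫ trivialCohomologyMap k V i n = 𝟙 _ := by
  rw [← groupCohomology.map_comp, ← groupCohomology.map_id]
  exact groupCohomology.map_congr hr rfl n

theorem nonempty_groupCohomology_succ_equiv_prod [Module (ZMod 2) V] {r : G →* S}
    (hr : r.comp S.subtype = MonoidHom.id S) (hS : S.index = 2) (n : ℕ)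
    [hn : Module.Finite k (groupCohomology (Rep.trivial k S V) n)]
    [hn' : Module.Finite k (groupCohomology (Rep.trivial k S V) (n + 1))] :
    Nonempty (groupCohomology (Rep.trivial k G V) (n + 1) ≃ₗ[k]
      groupCohomology (Rep.trivial k G V) n × groupCohomology (Rep.trivial k S V) (n + 1)) := by
  have hsection (i : ℕ) : (trivialCohomologyMap k V S.subtype i).hom ∘ₗ
      (trivialCohomologyMap k V r i).hom = LinearMap.id :=
    congrArg ModuleCat.Hom.hom (trivialCohomologyMap_comp_eq_id hr i)
  -- `Rep.res S.subtype (Rep.trivial k G V)` unfolds to `Rep.trivial k S V`, but not reducibly.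
  have hres (i : ℕ) : Function.Surjective (cohomologyRestriction (Rep.trivial k G V) S i) :=
    Function.RightInverse.surjective (LinearMap.congr_fun (hsection i))
  have : Module.Finite k (groupCohomology (Rep.res S.subtype (Rep.trivial k G V)) n) := hn
  have : Module.Finite k (groupCohomology (Rep.res S.subtype (Rep.trivial k G V)) (n + 1)) := hn'
  obtain ⟨d, hd, hexact⟩ := exists_gysin_hom hS (hres n) (hres (n + 1))
  exact ⟨(hexact.splitSurjectiveEquiv hd ⟨_, hsection (n + 1)⟩).1⟩

variable (k G V) in
/-- `H⁰(G, V) ≃ V` for trivial coefficients. -/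
noncomputable def groupCohomologyZeroEquiv : groupCohomology (Rep.trivial k G V) 0 ≃ₗ[k] V :=
  (groupCohomology.H0IsoOfIsTrivial (Rep.trivial k G V)).toLinearEquiv

instance finite_groupCohomology_of_subsingleton [Subsingleton G] [Module.Finite k V] (n : ℕ) :
    Module.Finite k (groupCohomology (Rep.trivial k G V) n) := by
  cases n with
  | zero => exact Module.Finite.equiv (groupCohomologyZeroEquiv k G V).symm
  | succ n =>
    have := ModuleCat.subsingleton_of_isZero
      (isZero_groupCohomology_succ_of_subsingleton (Rep.trivial k G V) n)
    infer_instance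

variable [Module.Finite k V] [Module (ZMod 2) V]

theorem nonempty_groupCohomology_equiv_of_card_eq_two (hG : Nat.card G = 2) (n : ℕ) :
    Nonempty (groupCohomology (Rep.trivial k G V) n ≃ₗ[k] V) := by
  induction n with
  | zero => exact ⟨groupCohomologyZeroEquiv k G V⟩
  | succ n ih =>
    obtain ⟨e⟩ := ih
    obtain ⟨e'⟩ := nonempty_groupCohomology_succ_equiv_prod (k := k) (V := V)
      (r := (1 : G →* (⊥ : Subgroup G))) (Subsingleton.elim _ _) (by simpa) n
    have := ModuleCat.subsingleton_of_isZero
      (isZero_groupCohomology_succ_of_subsingleton (Rep.trivial k (⊥ : Subgroup G) V) n)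
    have := uniqueOfSubsingleton (0 : groupCohomology (Rep.trivial k (⊥ : Subgroup G) V) (n + 1))
    exact ⟨e' ≪≫ₗ LinearEquiv.prodUnique ≪≫ₗ e⟩

end TrivialCoefficients

section KleinFour

lemma rangeRestrict_comp_comp_subtype {G H : Type*} [Group G] [Group H] {i : H →* G}
    {r : G →* H} (hr : r.comp i = MonoidHom.id H) :
    (i.rangeRestrict.comp r).comp i.range.subtype = MonoidHom.id i.range := by
  ext ⟨_, h, rfl⟩
  exact congrArg i (DFunLike.congr_fun hr h)

lemma exists_retraction_of_isKleinFour (G : Type*) [Group G] [IsKleinFour G] :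
    ∃ (S : Subgroup G) (r : G →* S),
      r.comp S.subtype = MonoidHom.id S ∧ S.index = 2 ∧ Nat.card S = 2 := by
  obtain ⟨e⟩ := IsKleinFour.nonempty_mulEquiv (G₁ := Multiplicative (ZMod 2 × ZMod 2)) (G₂ := G)
  let i : Multiplicative (ZMod 2) →* G :=
    e.toMonoidHom.comp (AddMonoidHom.inl (ZMod 2) (ZMod 2)).toMultiplicative
  let r : G →* Multiplicative (ZMod 2) :=
    (AddMonoidHom.fst (ZMod 2) (ZMod 2)).toMultiplicative.comp e.symm.toMonoidHom
  have hr : r.comp i = MonoidHom.id _ := by ext; simp [r, i]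
  have hinj : Function.Injective i :=
    Function.LeftInverse.injective (g := r) (DFunLike.congr_fun hr)
  have hcard : Nat.card i.range = 2 := by
    simpa using (Nat.card_congr (i.ofInjective hinj).toEquiv).symm
  have hindex := i.range.card_mul_index
  rw [hcard, IsKleinFour.card_four] at hindex
  exact ⟨i.range, _, rangeRestrict_comp_comp_subtype hr, by lia, hcard⟩

variable {k G V : Type u} [CommRing k] [Group G] [IsKleinFour G] [AddCommGroup V] [Module k V]
  [Module.Finite k V] [Module (ZMod 2) V]

theorem finrank_groupCohomology_klein_general (n : ℕ) :
    Nonempty (groupCohomology (Rep.trivial k G V) n ≃ₗ[k] (Fin (n + 1) → V)) := by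
  induction n with
  | zero => exact ⟨groupCohomologyZeroEquiv k G V ≪≫ₗ (LinearEquiv.funUnique (Fin 1) k V).symm⟩
  | succ n ih =>
    obtain ⟨S, r, hr, hindex, hcard⟩ := exists_retraction_of_isKleinFour G
    have hS (i : ℕ) := nonempty_groupCohomology_equiv_of_card_eq_two (k := k) (V := V) hcard i
    have (i : ℕ) : Module.Finite k (groupCohomology (Rep.trivial k S V) i) :=
      Module.Finite.equiv (hS i).some.symm
    obtain ⟨e⟩ := nonempty_groupCohomology_succ_equiv_prod (k := k) (V := V) hr hindex n
    exact ⟨e ≪≫ₗ LinearEquiv.prodComm k _ _ ≪≫ₗ (hS (n + 1)).some.prodCongr ih.some ≪≫ₗ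
      Fin.consLinearEquiv k fun _ => V⟩

end KleinFour

/-- Hⁿ(C₂ × C₂, 𝔽₂) is an `𝔽₂`-vector space of dimension `n + 1`. -/
theorem finrank_groupCohomology_klein (n : ℕ) :
    Module.finrank (ZMod 2)
      (groupCohomology (Rep.trivial (ZMod 2) Klein (ZMod 2)) n) = n + 1 := by
  obtain ⟨e⟩ := finrank_groupCohomology_klein_general (k := ZMod 2) (G := Klein) (V := ZMod 2) n
  rw [e.finrank_eq, Module.finrank_fin_fun]
end
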